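/- arXiv:1403.6594 — 3 statements merged into one kernel-verified Lean document; each statement's English description precedes it below -/
import Mathlib

section
/- Let n ≥ 1, let ε ∈ ℂⁿ and let ε₀, ε₊, ε₋ ∈ M(n,ℂ) satisfy the hermiticity conditions ε₀† = ε₀, ε₊ᵗ = ε₊, and ε₊† = ε₋ (so that also ε₋ᵗ = ε₋ and the entrywise conjugate of ε₋ equals ε₊). Suppose W : ℝ → M(n,ℂ) is differentiable, W(t) is symmetric for all t, and W satisfies the matrix Riccati equation i dW/dt = ε₋ + (1/2)(W ε₀ + ε₀ᵗ W) + W ε₊ W, and suppose η : ℝ → ℂⁿ is differentiable and satisfies the decoupled linear equation i dη/dt = ε + ε₋ η̄ + (1/2) ε₀ᵗ η, where η̄ denotes entrywise complex conjugation. Then z(t) := η(t) − W(t) η̄(t) satisfies i dz/dt = ε + W ε̄ + (1/2) ε₀ᵗ z + W ε₊ z, where ε̄ is the entrywise conjugate of ε. (Equivalently: under the FC change of variables z = η − W η̄, the coupled equations of motion on the Siegel-Jacobi ball separate into a Riccati equation for W and an equation for η independent of W.) -/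
/-!
Differentiating `z = η - W η̄` gives `z' = η' - W' η̄ - W η̄'`. Since `ε₀` is hermitian and `ε₊` is
symmetric with `ε₊ᴴ = ε₋`, the conjugated linear equation reads `η̄' = i (ε̄ + ε₊ η + ½ ε₀ η̄)`.
After substitution the terms `ε₋ η̄` and `½ W ε₀ η̄` cancel, and what is left regroups in `z`.
-/

open Matrix
attribute [local instance] Matrix.normedAddCommGroup Matrix.normedSpace

/-- Product rule for a matrix acting on a vector, proved entrywise. -/
theorem hasDerivAt_mulVec {n : ℕ} {A : ℝ → Matrix (Fin n) (Fin n) ℂ} {A' : Matrix (Fin n) (Fin n) ℂ}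
    {v : ℝ → Fin n → ℂ} {v' : Fin n → ℂ} {t : ℝ} (hA : HasDerivAt A A' t) (hv : HasDerivAt v v' t) :
    HasDerivAt (fun s => (A s).mulVec (v s)) (A'.mulVec (v t) + (A t).mulVec v') t := by
  rw [hasDerivAt_pi] at hv ⊢
  have hA' : ∀ i j, HasDerivAt (fun s => A s i j) (A' i j) t := fun i j =>
    hasDerivAt_pi.1 (hasDerivAt_pi.1 hA i) j
  intro i
  simp only [Matrix.mulVec, dotProduct, Pi.add_apply, ← Finset.sum_add_distrib]
  exact HasDerivAt.fun_sum fun j _ => (hA' i j).mul (hv j)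

/-- The conjugate of the linear equation's right-hand side; this is where hermiticity enters. -/
theorem star_linear_rhs {n : ℕ} (ε v : Fin n → ℂ) {ε₀ εp εm : Matrix (Fin n) (Fin n) ℂ}
    (h₀ : ε₀ᴴ = ε₀) (hp : εpᵀ = εp) (hpm : εpᴴ = εm) :
    star (-Complex.I • (ε + εm.mulVec (star v) + ((2 : ℂ)⁻¹ • ε₀ᵀ).mulVec v))
      = Complex.I • (star ε + εp.mulVec v + (2 : ℂ)⁻¹ • ε₀.mulVec (star v)) := by
  have h₁ : star (εm.mulVec (star v)) = εp.mulVec v := by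
    rw [Matrix.star_mulVec, star_star, ← hpm, conjTranspose_conjTranspose, ← mulVec_transpose, hp]
  have h₂ : star (ε₀ᵀ.mulVec v) = ε₀.mulVec (star v) := by
    rw [Matrix.star_mulVec, show ε₀ᵀᴴ = ε₀ᴴᵀ from rfl, h₀, vecMul_transpose]
  simp [smul_mulVec, h₁, h₂, star_smul]

/-- On the Siegel-Jacobi ball, if `W` satisfies the matrix Riccati equation
`i dW/dt = ε₋ + (1/2)(W ε₀ + ε₀ᵀ W) + W ε₊ W` and `η` satisfies the decoupled linear
equation `i dη/dt = ε + ε₋ η̄ + (1/2) ε₀ᵀ η`, then `z = η − W η̄` satisfies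
`i dz/dt = ε + W ε̄ + (1/2) ε₀ᵀ z + W ε₊ z`. -/
theorem fc_transform_couples_equations (n : ℕ) (hn : 1 ≤ n)
    (ε : Fin n → ℂ) (ε₀ εp εm : Matrix (Fin n) (Fin n) ℂ)
    (h₀ : ε₀ᴴ = ε₀) (hp : εpᵀ = εp) (hpm : εpᴴ = εm)
    (W : ℝ → Matrix (Fin n) (Fin n) ℂ)
    (hWsym : ∀ t : ℝ, (W t)ᵀ = W t)
    (hW : ∀ t : ℝ, HasDerivAt W
      (-Complex.I • (εm + (2 : ℂ)⁻¹ • (W t * ε₀ + ε₀ᵀ * W t) + W t * εp * W t)) t)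
    (η : ℝ → Fin n → ℂ)
    (hη : ∀ t : ℝ, HasDerivAt η
      (-Complex.I • (ε + εm.mulVec (star (η t)) + ((2 : ℂ)⁻¹ • ε₀ᵀ).mulVec (η t))) t) :
    ∀ t : ℝ, HasDerivAt (fun s => η s - (W s).mulVec (star (η s)))
      (-Complex.I • (ε + (W t).mulVec (star ε)
        + ((2 : ℂ)⁻¹ • ε₀ᵀ).mulVec (η t - (W t).mulVec (star (η t)))
        + (W t * εp).mulVec (η t - (W t).mulVec (star (η t))))) t := by
  intro t
  have hd := (hη t).sub (hasDerivAt_mulVec (hW t) (hη t).star)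
  rw [star_linear_rhs ε (η t) h₀ hp hpm] at hd
  refine hd.congr_deriv ?_
  simp only [smul_mulVec, add_mulVec, mulVec_add, mulVec_sub, mulVec_smul, ← mulVec_mulVec]
  module
end

section
/- Let ε_a, ε₊ ∈ ℂ, ε₀ ∈ ℝ, and set ε₋ := conj(ε₊). Suppose w : ℝ → ℂ is differentiable and satisfies the Riccati equation i dw/dt = ε₋ + ε₀ w + ε₊ w², and η : ℝ → ℂ is differentiable and satisfies i dη/dt = ε_a + ε₋ η̄ + (ε₀/2) η. Then z(t) := η(t) − w(t) conj(η(t)) satisfies i dz/dt = ε_a + conj(ε_a) w + (ε₀/2 + ε₊ w) z. (That is, the FC change of variables z = η − w η̄ transforms the decoupled system for (η, w) into the coupled Berezin equations of motion on the Siegel-Jacobi disk.) -/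
/-- If `w` satisfies the Riccati equation `i dw/dt = ε₋ + ε₀ w + ε₊ w²` and `η` satisfies the
decoupled equation `i dη/dt = ε_a + ε₋ η̄ + (ε₀/2) η` (with `ε₋ = conj ε₊`, `ε₀` real), then
`z = η − w η̄` satisfies the Berezin equation of motion
`i dz/dt = ε_a + conj(ε_a) w + (ε₀/2 + ε₊ w) z` on the Siegel-Jacobi disk. -/
theorem fc_transform_siegel_jacobi_disk (εa εp : ℂ) (ε₀ : ℝ) (w η : ℝ → ℂ)
    (hw : ∀ t : ℝ, HasDerivAt w
      (-Complex.I * ((starRingEnd ℂ) εp + (ε₀ : ℂ) * w t + εp * w t ^ 2)) t)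
    (hη : ∀ t : ℝ, HasDerivAt η
      (-Complex.I * (εa + (starRingEnd ℂ) εp * (starRingEnd ℂ) (η t)
        + ((ε₀ : ℂ) / 2) * η t)) t) :
    ∀ t : ℝ, HasDerivAt (fun s => η s - w s * (starRingEnd ℂ) (η s))
      (-Complex.I * (εa + (starRingEnd ℂ) εa * w t
        + ((ε₀ : ℂ) / 2 + εp * w t) * (η t - w t * (starRingEnd ℂ) (η t)))) t := by
  intro t
  have hconj := (hη t).star
  refine ((hη t).sub ((hw t).mul hconj)).congr_deriv ?_
  -- Conjugation flips the sign of `-I` and fixes the real `ε₀`; the `ε₋ η̄` terms then cancel.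
  simp only [← starRingEnd_apply, map_mul, map_add, map_neg, map_div₀, Complex.conj_I,
    Complex.conj_ofReal, Complex.conj_conj, map_ofNat]
  ring
end

section
/- Fix k ∈ ℂ and consider the following ℂ-linear endomorphisms of the polynomial algebra ℂ[z, w] in two variables: a := ∂/∂z; a† := (multiplication by z) + (multiplication by w)∘(∂/∂z); K₋ := ∂/∂w; K₀ := k·id + (1/2)(multiplication by z)∘(∂/∂z) + (multiplication by w)∘(∂/∂w); K₊ := multiplication by (z²/2 + 2kw) + (multiplication by zw)∘(∂/∂z) + (multiplication by w²)∘(∂/∂w). Then these operators satisfy the commutation relations of the Jacobi algebra g^J_1: [a, a†] = id; [K₀, K₊] = K₊; [K₀, K₋] = −K₋; [K₋, K₊] = 2K₀; [a, K₊] = a†; [K₋, a†] = a; [K₊, a†] = 0; [K₋, a] = 0; [K₀, a†] = (1/2)a†; [K₀, a] = −(1/2)a. -/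
/-! Each relation is an identity between differential operators, so it suffices to apply both sides to
an arbitrary polynomial `f`. Expanding with the Leibniz rule turns the relation into an identity in the
commutative ring `ℂ[z, w]` between `z`, `w`, `f` and the partial derivatives of `f`. The second-order
terms cancel because `∂/∂z` and `∂/∂w` commute (`pderiv_swap`), and what is left is polynomial arithmetic
using `2 * C 2⁻¹ = 1`. -/

open MvPolynomial

/-- `∂/∂z` acting on `ℂ[z, w]` (with `z = X 0`, `w = X 1`). -/
noncomputable def Dz : Module.End ℂ (MvPolynomial (Fin 2) ℂ) :=
  (pderiv (0 : Fin 2)).toLinearMap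

/-- `∂/∂w` acting on `ℂ[z, w]`. -/
noncomputable def Dw : Module.End ℂ (MvPolynomial (Fin 2) ℂ) :=
  (pderiv (1 : Fin 2)).toLinearMap

/-- Multiplication by a polynomial, as an endomorphism of `ℂ[z, w]`. -/
noncomputable def mulOp (p : MvPolynomial (Fin 2) ℂ) :
    Module.End ℂ (MvPolynomial (Fin 2) ℂ) :=
  LinearMap.mulLeft ℂ p

/-- The annihilation operator `a = ∂/∂z`. -/
noncomputable def aOp : Module.End ℂ (MvPolynomial (Fin 2) ℂ) := Dz

/-- The creation operator `a† = z + w ∂/∂z`. -/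
noncomputable def aDagOp : Module.End ℂ (MvPolynomial (Fin 2) ℂ) :=
  mulOp (X 0) + mulOp (X 1) * Dz

/-- `K₋ = ∂/∂w`. -/
noncomputable def KmOp : Module.End ℂ (MvPolynomial (Fin 2) ℂ) := Dw

/-- `K₀ = k + (1/2) z ∂/∂z + w ∂/∂w`. -/
noncomputable def K0Op (k : ℂ) : Module.End ℂ (MvPolynomial (Fin 2) ℂ) :=
  k • (1 : Module.End ℂ (MvPolynomial (Fin 2) ℂ))
    + (2 : ℂ)⁻¹ • (mulOp (X 0) * Dz) + mulOp (X 1) * Dw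

/-- `K₊ = z²/2 + 2kw + zw ∂/∂z + w² ∂/∂w`. -/
noncomputable def KpOp (k : ℂ) : Module.End ℂ (MvPolynomial (Fin 2) ℂ) :=
  mulOp (C ((2 : ℂ)⁻¹) * X 0 ^ 2 + C (2 * k) * X 1)
    + mulOp (X 0 * X 1) * Dz + mulOp (X 1 ^ 2) * Dw

/-- Mixed partial derivatives agree: the bracket of two derivations is again a derivation, and this
one kills both variables. -/
lemma pderiv_swap (f : MvPolynomial (Fin 2) ℂ) :
    pderiv (1 : Fin 2) (pderiv (0 : Fin 2) f) = pderiv (0 : Fin 2) (pderiv (1 : Fin 2) f) := by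
  have h : ⁅pderiv (R := ℂ) (1 : Fin 2), pderiv (R := ℂ) (0 : Fin 2)⁆ = 0 := by
    apply MvPolynomial.derivation_ext
    intro i
    fin_cases i <;> simp [Derivation.commutator_apply, pderiv_X]
  have h' := DFunLike.congr_fun h f
  simpa [Derivation.commutator_apply, sub_eq_zero] using h'

/-- The holomorphic first-order differential operators `a`, `a†`, `K₋`, `K₀`, `K₊` on `ℂ[z, w]`
satisfy the commutation relations of the Jacobi algebra `g^J_1`. -/
theorem jacobi_algebra_differential_realization (k : ℂ) :
    aOp * aDagOp - aDagOp * aOp = 1 ∧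
    K0Op k * KpOp k - KpOp k * K0Op k = KpOp k ∧
    K0Op k * KmOp - KmOp * K0Op k = -KmOp ∧
    KmOp * KpOp k - KpOp k * KmOp = (2 : ℂ) • K0Op k ∧
    aOp * KpOp k - KpOp k * aOp = aDagOp ∧
    KmOp * aDagOp - aDagOp * KmOp = aOp ∧
    KpOp k * aDagOp - aDagOp * KpOp k = 0 ∧
    KmOp * aOp - aOp * KmOp = 0 ∧
    K0Op k * aDagOp - aDagOp * K0Op k = (2 : ℂ)⁻¹ • aDagOp ∧
    K0Op k * aOp - aOp * K0Op k = -((2 : ℂ)⁻¹ • aOp) := by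
  have h10 : pderiv (1 : Fin 2) (X 0 : MvPolynomial (Fin 2) ℂ) = 0 :=
    pderiv_X_of_ne (by decide)
  have h01 : pderiv (0 : Fin 2) (X 1 : MvPolynomial (Fin 2) ℂ) = 0 :=
    pderiv_X_of_ne (by decide)
  -- the polynomial ring is not a field, so `grind` has to be told that `C 2⁻¹` is inverse to `2`
  have hc : (C (2 : ℂ)⁻¹ : MvPolynomial (Fin 2) ℂ) * 2 = 1 := by
    rw [show (2 : MvPolynomial (Fin 2) ℂ) = C 2 from (map_ofNat C 2).symm, ← C_mul]
    norm_num
  have h2 : (C (2 : ℂ) : MvPolynomial (Fin 2) ℂ) = 2 := map_ofNat C 2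
  have hd (i : Fin 2) : pderiv i (2 : MvPolynomial (Fin 2) ℂ) = 0 := by rw [← h2, pderiv_C]
  refine ⟨?_, ?_, ?_, ?_, ?_, ?_, ?_, ?_, ?_, ?_⟩ <;>
    refine LinearMap.ext fun f => ?_ <;>
    simp only [aOp, aDagOp, KmOp, K0Op, KpOp, Dz, Dw, mulOp, LinearMap.sub_apply,
      LinearMap.add_apply, LinearMap.neg_apply, LinearMap.smul_apply, LinearMap.zero_apply,
      Module.End.mul_apply, Module.End.one_apply, LinearMap.mulLeft_apply,
      Derivation.coeFn_coe, map_add, Derivation.leibniz,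
      Derivation.leibniz_pow, smul_eq_mul, nsmul_eq_mul, pderiv_X_self, h10, h01, pderiv_C,
      MvPolynomial.smul_eq_C_mul, C_mul, h2, hd, pderiv_swap] <;>
    push_cast <;>
    grind
end
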